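/- For every n ∈ ℤ and every t ∈ ℝ, the principal-value limit lim_{ε→0⁺} (i/π) ∫_{{y : |t−y| > ε}} a_n(y)/(t − y) dy exists and equals a_n(t) if n ≥ 0, and equals −a_n(t) if n < 0. In other words, each a_n is an eigenfunction of the Hilbert transformation H f(t) = (i/π) p.v. ∫_ℝ f(y)/(t − y) dy with eigenvalue +1 for n ≥ 0 and −1 for n < 0. -/

import Mathlib

open MeasureTheory

/-!
For `z` in the lower half-plane, the truncated integrals for `y ↦ (y - z)⁻¹` can be folded about
`t`; with `c = t - z` they converge to `∫ (c² - s²)⁻¹ ds = -πi / c`, which the primitive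
`(log (c + s) - log (c - s)) / (2c)` evaluates because `c ± s` stay in the upper half-plane.

Multiplying a function `f` by the Möbius factor `(y - u) / (y - z)` multiplies its Hilbert transform
by the value of that factor at `t`, up to a multiple of `∫ f(y) / (y - z) dy`; for the powers
considered here the correction vanishes, being the integral of the derivative of
`((y - u) / (y - z)) ^ (n + 1)`. This settles `n ≥ 0` by induction. Complex conjugation exchanges
the two half-planes and changes the sign of the Hilbert transform, which settles `n < 0`.
-/

section HilbertTransform

open Bornology Complex ComplexConjugate Filter Set Topology

theorem norm_sub_le_mul_norm_sub {E : Type*} [SeminormedAddCommGroup E] {x z : E} {δ : ℝ}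
    (hδ : 0 < δ) (hxz : δ ≤ ‖x - z‖) (u : E) :
    ‖x - u‖ ≤ (1 + ‖z - u‖ / δ) * ‖x - z‖ := by
  have h : ‖z - u‖ ≤ ‖z - u‖ / δ * ‖x - z‖ := by
    rw [div_mul_eq_mul_div, le_div_iff₀ hδ]
    gcongr
  linarith [norm_sub_le_norm_sub_add_norm_sub x z u]

theorem abs_im_le_norm_ofReal_sub (y : ℝ) (z : ℂ) : |z.im| ≤ ‖(y : ℂ) - z‖ := by
  simpa using abs_im_le_norm ((y : ℂ) - z)

theorem ofReal_sub_ne_zero {z : ℂ} (hz : z.im ≠ 0) (y : ℝ) : (y : ℂ) - z ≠ 0 :=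
  norm_pos_iff.1 ((abs_pos.2 hz).trans_le (abs_im_le_norm_ofReal_sub y z))

theorem memLp_two_inv_ofReal_sub_I : MemLp (fun y : ℝ => ((y : ℂ) - I)⁻¹) 2 := by
  rw [memLp_two_iff_integrable_sq_norm (by fun_prop)]
  refine integrable_inv_one_add_sq.congr (.of_forall fun y => ?_)
  simp only [norm_inv, inv_pow, ← normSq_eq_norm_sq, normSq_apply]
  simp [sq, add_comm]

theorem memLp_two_inv_ofReal_sub_restrict {z : ℂ} {s : Set ℝ} {δ : ℝ} (hs : MeasurableSet s)
    (hδ : 0 < δ) (hz : ∀ y ∈ s, δ ≤ ‖(y : ℂ) - z‖) :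
    MemLp (fun y : ℝ => ((y : ℂ) - z)⁻¹) 2 (volume.restrict s) := by
  refine memLp_two_inv_ofReal_sub_I.restrict s |>.of_le_mul (c := 1 + ‖z - I‖ / δ) (by fun_prop) ?_
  filter_upwards [ae_restrict_mem hs] with y hy
  have hI : 0 < ‖(y : ℂ) - I‖ := norm_pos_iff.2 (ofReal_sub_ne_zero (by simp) y)
  rw [norm_inv, norm_inv, ← div_eq_mul_inv, le_div_iff₀ hI,
    inv_mul_le_iff₀' (hδ.trans_le (hz y hy))]
  exact norm_sub_le_mul_norm_sub hδ (hz y hy) I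

theorem memLp_two_inv_ofReal_sub {z : ℂ} (hz : z.im ≠ 0) :
    MemLp (fun y : ℝ => ((y : ℂ) - z)⁻¹) 2 := by
  simpa using memLp_two_inv_ofReal_sub_restrict MeasurableSet.univ (abs_pos.2 hz)
    fun y _ => abs_im_le_norm_ofReal_sub y z

theorem memLp_two_pow_div_pow_succ {z : ℂ} (hz : z.im ≠ 0) (u : ℂ) (n : ℕ) :
    MemLp (fun y : ℝ => ((y : ℂ) - u) ^ n / ((y : ℂ) - z) ^ (n + 1)) 2 := by
  refine (memLp_two_inv_ofReal_sub hz).of_le_mul (c := (1 + ‖z - u‖ / |z.im|) ^ n)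
    (Measurable.aestronglyMeasurable (by fun_prop)) (.of_forall fun y => ?_)
  have hpos : 0 < ‖(y : ℂ) - z‖ := norm_pos_iff.2 (ofReal_sub_ne_zero hz y)
  have hle := norm_sub_le_mul_norm_sub (abs_pos.2 hz) (abs_im_le_norm_ofReal_sub y z) u
  rw [← div_le_iff₀ hpos] at hle
  calc ‖((y : ℂ) - u) ^ n / ((y : ℂ) - z) ^ (n + 1)‖
      = (‖(y : ℂ) - u‖ / ‖(y : ℂ) - z‖) ^ n * ‖((y : ℂ) - z)⁻¹‖ := by
        rw [norm_div, norm_pow, norm_pow, norm_inv, pow_succ, div_pow]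
        field_simp
    _ ≤ (1 + ‖z - u‖ / |z.im|) ^ n * ‖((y : ℂ) - z)⁻¹‖ := by gcongr

theorem measurableSet_lt_abs_sub (t ε : ℝ) : MeasurableSet {y : ℝ | ε < |t - y|} :=
  measurableSet_lt measurable_const (by fun_prop)

theorem integrableOn_div_sub_of_memLp_two {f : ℝ → ℂ} (hf : MemLp f 2) (t : ℝ) {ε : ℝ}
    (hε : 0 < ε) : IntegrableOn (fun y : ℝ => f y / ((t : ℂ) - y)) {y | ε < |t - y|} := by
  have hinv : MemLp (fun y : ℝ => ((y : ℂ) - t)⁻¹) 2 (volume.restrict {y | ε < |t - y|}) := by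
    refine memLp_two_inv_ofReal_sub_restrict (measurableSet_lt_abs_sub t ε) hε fun y hy => ?_
    rw [← ofReal_sub, norm_real, Real.norm_eq_abs, abs_sub_comm]
    exact le_of_lt hy
  refine ((hf.restrict _).integrable_mul hinv.neg).congr (.of_forall fun y => ?_)
  simp [div_eq_mul_inv, ← inv_neg]

/-- `f` has Hilbert transform `L` at `t`: the principal value of `(i / π) ∫ f(y) / (t - y) dy`
exists and equals `L`. The truncated integrals are Bochner integrals, so the notion is meaningful
for functions whose truncated integrands are integrable, such as `f ∈ L²`. -/
def HasHilbertTransformAt (f : ℝ → ℂ) (L : ℂ) (t : ℝ) : Prop :=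
  Tendsto (fun ε : ℝ => (I / Real.pi) * ∫ y in {y : ℝ | ε < |t - y|}, f y / ((t : ℂ) - (y : ℂ)))
    (𝓝[>] 0) (𝓝 L)

theorem HasHilbertTransformAt.conj {f : ℝ → ℂ} {L : ℂ} {t : ℝ} (h : HasHilbertTransformAt f L t) :
    HasHilbertTransformAt (fun y => conj (f y)) (-conj L) t := by
  refine ((continuous_conj.tendsto L).comp h).neg.congr fun ε => ?_
  simp [← integral_conj, neg_div]

theorem aecover_lt_abs_sub (t : ℝ) :
    AECover volume (𝓝[>] (0 : ℝ)) fun ε => {y : ℝ | ε < |t - y|} where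
  ae_eventually_mem := by
    filter_upwards [Measure.ae_ne volume t] with y hy
    exact mem_nhdsWithin_of_mem_nhds (Iio_mem_nhds (abs_pos.2 (sub_ne_zero.2 hy.symm)))
  measurableSet := measurableSet_lt_abs_sub t

theorem setIntegral_lt_abs_sub_eq_symm {f : ℝ → ℂ} (hf : MemLp f 2) (t : ℝ) {ε : ℝ} (hε : 0 < ε) :
    ∫ y in {y | ε < |t - y|}, f y / ((t : ℂ) - y) =
      2⁻¹ * ∫ s in {s | ε < |s|}, (f (t - s) - f (t + s)) / s := by
  have hsub := Measure.measurePreserving_sub_left volume t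
  have hadd := measurePreserving_add_left volume t
  have hsub_emb : MeasurableEmbedding fun s : ℝ => t - s := measurableEmbedding_subLeft t
  have hadd_emb : MeasurableEmbedding fun s : ℝ => t + s := measurableEmbedding_addLeft t
  have hsub_pre : (fun s => t - s) ⁻¹' {y | ε < |t - y|} = {s | ε < |s|} := by ext; simp
  have hadd_pre : (fun s => t + s) ⁻¹' {y | ε < |t - y|} = {s | ε < |s|} := by ext; simp
  have hint := integrableOn_div_sub_of_memLp_two hf t hε
  have hsub_int := (hsub.integrableOn_comp_preimage hsub_emb).2 hint
  have hadd_int := (hadd.integrableOn_comp_preimage hadd_emb).2 hint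
  have hsub_eq := hsub.setIntegral_preimage_emb hsub_emb
    (fun y => f y / ((t : ℂ) - y)) {y | ε < |t - y|}
  have hadd_eq := hadd.setIntegral_preimage_emb hadd_emb
    (fun y => f y / ((t : ℂ) - y)) {y | ε < |t - y|}
  rw [hsub_pre] at hsub_int hsub_eq
  rw [hadd_pre] at hadd_int hadd_eq
  have hfold : ∀ s : ℝ, (f (t - s) - f (t + s)) / s =
      f (t - s) / (t - (t - s : ℝ)) + f (t + s) / (t - (t + s : ℝ)) := fun s => by
    push_cast
    rw [sub_sub_cancel, sub_add_cancel_left, div_neg, sub_div, sub_eq_add_neg]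
  simp only [Function.comp_def] at hsub_int hadd_int
  simp only [hfold]
  rw [integral_add hsub_int hadd_int, hsub_eq, hadd_eq]
  ring

theorem hasHilbertTransformAt_of_integrable_symm {f : ℝ → ℂ} (hf : MemLp f 2) {t : ℝ}
    (hsymm : Integrable fun s : ℝ => (f (t - s) - f (t + s)) / s) :
    HasHilbertTransformAt f (I / (2 * Real.pi) * ∫ s : ℝ, (f (t - s) - f (t + s)) / s) t := by
  have hlim := ((aecover_lt_abs_sub 0).integral_tendsto_of_countably_generated hsymm).const_mul
    (I / (2 * Real.pi))
  refine hlim.congr' ?_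
  filter_upwards [self_mem_nhdsWithin] with ε hε
  rw [setIntegral_lt_abs_sub_eq_symm hf t hε]
  simp only [zero_sub, abs_neg]
  ring

theorem HasHilbertTransformAt.mul_sub_div_sub {f : ℝ → ℂ} {L : ℂ} {t : ℝ}
    (h : HasHilbertTransformAt f L t) (hf : MemLp f 2) {z : ℂ} (hz : z.im ≠ 0) (u : ℂ) :
    HasHilbertTransformAt (fun y => f y * (((y : ℂ) - u) / ((y : ℂ) - z)))
      ((t - u) / (t - z) * L + (z - u) / (t - z) * (I / Real.pi * ∫ y : ℝ, f y / ((y : ℂ) - z)))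
      t := by
  have hint : Integrable fun y : ℝ => f y / ((y : ℂ) - z) :=
    hf.integrable_mul (memLp_two_inv_ofReal_sub hz)
  have hlim := (aecover_lt_abs_sub t).integral_tendsto_of_countably_generated hint
  refine ((h.const_mul _).add ((hlim.const_mul _).const_mul _)).congr' ?_
  filter_upwards [self_mem_nhdsWithin] with ε hε
  have hpartial : ∀ y ∈ {y : ℝ | ε < |t - y|}, f y * (((y : ℂ) - u) / (y - z)) / (t - y) =
      (t - u) / (t - z) * (f y / (t - y)) + (z - u) / (t - z) * (f y / (y - z)) := by
    intro y hy
    have hty : (t : ℂ) - y ≠ 0 := by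
      rw [← ofReal_sub, ofReal_ne_zero]
      exact abs_pos.1 (lt_trans hε hy)
    have hyz := ofReal_sub_ne_zero hz y
    have htz := ofReal_sub_ne_zero hz t
    field_simp
    ring
  rw [setIntegral_congr_fun (measurableSet_lt_abs_sub t ε) hpartial,
    integral_add ((integrableOn_div_sub_of_memLp_two hf t hε).const_mul _)
      (hint.integrableOn.const_mul _), integral_const_mul, integral_const_mul]
  ring

theorem tendsto_sub_div_sub_cobounded (u z : ℂ) :
    Tendsto (fun y : ℝ => ((y : ℂ) - u) / ((y : ℂ) - z)) (cobounded ℝ) (𝓝 1) := by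
  have hsub : Tendsto (fun y : ℝ => (y : ℂ) - z) (cobounded ℝ) (cobounded ℂ) :=
    (tendsto_sub_const_cobounded z).comp (RCLike.tendsto_ofReal_cobounded_cobounded ℂ)
  have hlim := ((tendsto_inv₀_cobounded.comp hsub).const_mul (z - u)).const_add 1
  rw [mul_zero, add_zero] at hlim
  refine hlim.congr' ?_
  filter_upwards [hsub.eventually_ne_cobounded 0] with y hy
  simp only [Function.comp_apply]
  field_simp
  ring

theorem hasDerivAt_sub_div_sub_pow {y : ℝ} {z : ℂ} (hyz : (y : ℂ) - z ≠ 0) (u : ℂ) (n : ℕ) :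
    HasDerivAt (fun y : ℝ => (((y : ℂ) - u) / ((y : ℂ) - z)) ^ (n + 1))
      ((n + 1) * ((u - z) * (((y : ℂ) - u) ^ n / ((y : ℂ) - z) ^ (n + 2)))) y := by
  have hy : HasDerivAt (fun y : ℝ => (y : ℂ)) 1 y := (hasDerivAt_id y).ofReal_comp
  refine (((hy.sub_const u).div (hy.sub_const z) hyz).pow (n + 1)).congr_deriv ?_
  simp only [Pi.div_apply, Nat.add_sub_cancel, div_pow]
  push_cast
  field_simp
  ring

theorem sub_mul_integral_pow_div_pow_eq_zero {z : ℂ} (hz : z.im ≠ 0) (u : ℂ) (n : ℕ) :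
    (z - u) * ∫ y : ℝ, ((y : ℂ) - u) ^ n / ((y : ℂ) - z) ^ (n + 2) = 0 := by
  have hint : Integrable fun y : ℝ => ((y : ℂ) - u) ^ n / ((y : ℂ) - z) ^ (n + 2) := by
    refine ((memLp_two_pow_div_pow_succ hz u n).integrable_mul
      (memLp_two_inv_ofReal_sub hz)).congr (.of_forall fun y => ?_)
    simp only [Pi.mul_apply]
    rw [← div_eq_mul_inv, div_div, ← pow_succ]
  have hlim := (tendsto_sub_div_sub_cobounded u z).pow (n + 1)
  have hzero := integral_of_hasDerivAt_of_tendsto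
    (fun y => hasDerivAt_sub_div_sub_pow (ofReal_sub_ne_zero hz y) u n)
    ((hint.const_mul _).const_mul _) (hlim.mono_left IsOrderBornology.atBot_le_cobounded)
    (hlim.mono_left IsOrderBornology.atTop_le_cobounded)
  rw [sub_self, integral_const_mul, integral_const_mul] at hzero
  linear_combination -(mul_eq_zero.1 hzero).resolve_left (Nat.cast_add_one_ne_zero n)

theorem integrable_inv_sq_sub_sq {c : ℂ} (hc : c.im ≠ 0) :
    Integrable fun s : ℝ => (c ^ 2 - (s : ℂ) ^ 2)⁻¹ := by
  refine ((memLp_two_inv_ofReal_sub (z := -c) (by simpa)).integrable_mul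
    (memLp_two_inv_ofReal_sub hc)).neg.congr (.of_forall fun s => ?_)
  simp only [Pi.neg_apply, Pi.mul_apply]
  rw [← mul_inv, ← inv_neg]
  ring

theorem tendsto_log_add_sub_log_sub_atTop {c : ℂ} (hc : 0 < c.im) :
    Tendsto (fun s : ℝ => log (c + s) - log (c - s)) atTop (𝓝 (-(Real.pi * I))) := by
  have hdiv : Tendsto (fun s : ℝ => c / s) atTop (𝓝 0) := by
    simpa [div_eq_mul_inv] using
      (tendsto_inv₀_cobounded.comp (RCLike.tendsto_ofReal_atTop_cobounded ℂ)).const_mul c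
  have him : ∀ᶠ s : ℝ in atTop, 0 < (c / s).im := by
    filter_upwards [eventually_gt_atTop 0] with s hs
    rw [div_ofReal_im]
    positivity
  have hplus : Tendsto (fun s : ℝ => log (1 + c / s)) atTop (𝓝 0) := by
    simpa using (hdiv.const_add 1).clog (by simp)
  -- `-1` lies on the branch cut and is approached from the upper half-plane.
  have hminus : Tendsto (fun s : ℝ => log (-1 + c / s)) atTop (𝓝 (Real.pi * I)) := by
    have hwithin : Tendsto (fun s : ℝ => -1 + c / s) atTop (𝓝[{w | 0 ≤ w.im}] (-1)) := by
      refine tendsto_nhdsWithin_iff.2 ⟨by simpa using hdiv.const_add (-1), ?_⟩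
      filter_upwards [him] with s hs
      simpa using hs.le
    simpa [Function.comp_def] using (tendsto_log_nhdsWithin_im_nonneg_of_re_neg_of_im_zero
      (z := -1) (by simp) (by simp)).comp hwithin
  have hlim := hplus.sub hminus
  rw [zero_sub] at hlim
  refine hlim.congr' ?_
  filter_upwards [him, eventually_gt_atTop 0] with s him_pos hs
  have hs' : (s : ℂ) ≠ 0 := ofReal_ne_zero.2 hs.ne'
  have hadd_ne : 1 + c / s ≠ 0 := fun h => him_pos.ne' (by simpa using congrArg im h)
  have hsub_ne : -1 + c / s ≠ 0 := fun h => him_pos.ne' (by simpa using congrArg im h)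
  have hadd : c + s = s * (1 + c / s) := by field_simp; ring
  have hsub : c - s = s * (-1 + c / s) := by field_simp; ring
  rw [hadd, hsub, log_ofReal_mul hs hadd_ne, log_ofReal_mul hs hsub_ne, add_sub_add_left_eq_sub]

theorem hasDerivAt_log_add_sub_log_sub {c : ℂ} (hc : 0 < c.im) (s : ℝ) :
    HasDerivAt (fun s : ℝ => log (c + s) - log (c - s)) (2 * c * (c ^ 2 - (s : ℂ) ^ 2)⁻¹) s := by
  have hadd : c + s ∈ slitPlane := Or.inr (by simpa using hc.ne')
  have hsub : c - s ∈ slitPlane := Or.inr (by simpa using hc.ne')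
  have hs : HasDerivAt (fun s : ℝ => (s : ℂ)) 1 s := (hasDerivAt_id s).ofReal_comp
  refine (((hs.const_add c).clog_real hadd).sub ((hs.const_sub c).clog_real hsub)).congr_deriv ?_
  have hadd_ne := slitPlane_ne_zero hadd
  have hsub_ne := slitPlane_ne_zero hsub
  rw [sq_sub_sq]
  field_simp
  ring

theorem integral_inv_sq_sub_sq {c : ℂ} (hc : 0 < c.im) :
    ∫ s : ℝ, (c ^ 2 - (s : ℂ) ^ 2)⁻¹ = -(Real.pi * I) / c := by
  have htop := tendsto_log_add_sub_log_sub_atTop hc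
  have hbot : Tendsto (fun s : ℝ => log (c + s) - log (c - s)) atBot (𝓝 (Real.pi * I)) := by
    simpa [Function.comp_def, ← sub_eq_add_neg] using (htop.comp tendsto_neg_atBot_atTop).neg
  have hmul := integral_of_hasDerivAt_of_tendsto (hasDerivAt_log_add_sub_log_sub hc)
    ((integrable_inv_sq_sub_sq hc.ne').const_mul _) hbot htop
  rw [integral_const_mul] at hmul
  have hc_ne : c ≠ 0 := fun h => hc.ne' (by simp [h])
  rw [eq_div_iff hc_ne]
  linear_combination hmul / 2

theorem hasHilbertTransformAt_inv_sub {z : ℂ} (hz : z.im < 0) (t : ℝ) :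
    HasHilbertTransformAt (fun y => ((y : ℂ) - z)⁻¹) ((t : ℂ) - z)⁻¹ t := by
  have hc : 0 < ((t : ℂ) - z).im := by simpa using hz
  have hfold : (fun s : ℝ => 2 * (((t : ℂ) - z) ^ 2 - (s : ℂ) ^ 2)⁻¹) =ᵐ[volume]
      fun s => ((((t - s : ℝ) : ℂ) - z)⁻¹ - (((t + s : ℝ) : ℂ) - z)⁻¹) / s := by
    filter_upwards [Measure.ae_ne volume 0] with s hs
    have hs' : (s : ℂ) ≠ 0 := ofReal_ne_zero.2 hs
    have hsub := ofReal_sub_ne_zero hz.ne (t - s)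
    have hadd := ofReal_sub_ne_zero hz.ne (t + s)
    have hfactor : ((t : ℂ) - z) ^ 2 - (s : ℂ) ^ 2 =
        (((t - s : ℝ) : ℂ) - z) * (((t + s : ℝ) : ℂ) - z) := by
      push_cast
      ring
    rw [hfactor]
    field_simp
    push_cast
    ring
  have hint := (integrable_inv_sq_sub_sq hc.ne').const_mul 2
  have hH := hasHilbertTransformAt_of_integrable_symm (memLp_two_inv_ofReal_sub hz.ne)
    (hint.congr hfold)
  rw [← integral_congr_ae hfold, integral_const_mul, integral_inv_sq_sub_sq hc] at hH
  convert hH using 1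
  have hpi : (Real.pi : ℂ) ≠ 0 := ofReal_ne_zero.2 Real.pi_ne_zero
  have htz := ofReal_sub_ne_zero hz.ne t
  field_simp
  simp

theorem hasHilbertTransformAt_pow_div_pow_succ {z : ℂ} (hz : z.im < 0) (u : ℂ) (n : ℕ) (t : ℝ) :
    HasHilbertTransformAt (fun y => ((y : ℂ) - u) ^ n / ((y : ℂ) - z) ^ (n + 1))
      (((t : ℂ) - u) ^ n / ((t : ℂ) - z) ^ (n + 1)) t := by
  induction n with
  | zero => simpa using hasHilbertTransformAt_inv_sub hz t
  | succ n ih =>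
    have hsucc : ∀ w : ℂ, (w - u) ^ n / (w - z) ^ (n + 1) * ((w - u) / (w - z)) =
        (w - u) ^ (n + 1) / (w - z) ^ (n + 1 + 1) := fun w => by
      rw [div_mul_div_comm, ← pow_succ, ← pow_succ]
    have hcorrection : (z - u) / (t - z) * (I / Real.pi *
        ∫ y : ℝ, ((y : ℂ) - u) ^ n / ((y : ℂ) - z) ^ (n + 1) / ((y : ℂ) - z)) = 0 := by
      simp only [div_div, ← pow_succ]
      linear_combination I / Real.pi / (t - z) * sub_mul_integral_pow_div_pow_eq_zero hz.ne u n
    have hstep := ih.mul_sub_div_sub (memLp_two_pow_div_pow_succ hz.ne u n) hz.ne u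
    rw [hcorrection, add_zero, mul_comm] at hstep
    simpa only [hsucc] using hstep

theorem stmt_6_general {u z : ℂ} (hu : 0 < u.im) (hz : z.im < 0) (n : ℤ) (t : ℝ) :
    HasHilbertTransformAt (fun y => ((y : ℂ) - u) ^ n / ((y : ℂ) - z) ^ (n + 1))
      (if 0 ≤ n then ((t : ℂ) - u) ^ n / ((t : ℂ) - z) ^ (n + 1)
        else -(((t : ℂ) - u) ^ n / ((t : ℂ) - z) ^ (n + 1))) t := by
  cases n with
  | ofNat m => simpa [← zpow_natCast] using hasHilbertTransformAt_pow_div_pow_succ hz u m t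
  | negSucc m =>
    have hswap : ∀ y : ℝ, conj (((y : ℂ) - conj z) ^ m / ((y : ℂ) - conj u) ^ (m + 1)) =
        ((y : ℂ) - u) ^ Int.negSucc m / ((y : ℂ) - z) ^ (Int.negSucc m + 1) := fun y => by
      have hexp : Int.negSucc m + 1 = -(m : ℤ) := by lia
      rw [hexp, zpow_negSucc, zpow_neg, zpow_natCast]
      simp [div_eq_mul_inv, mul_comm]
    have hupper :=
      (hasHilbertTransformAt_pow_div_pow_succ (z := conj u) (by simpa) (conj z) m t).conj
    rw [if_neg (Int.negSucc_lt_zero m).not_ge, ← hswap]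
    simpa only [hswap] using hupper

end HilbertTransform

theorem stmt_6 (a : ℤ → ℝ → ℂ)
    (ha : ∀ (n : ℤ) (t : ℝ),
      a n t = ((t : ℂ) - Complex.I) ^ n / ((t : ℂ) + Complex.I) ^ (n + 1))
    (n : ℤ) (t : ℝ) :
    Filter.Tendsto
      (fun ε : ℝ =>
        (Complex.I / Real.pi) *
          ∫ y in {y : ℝ | ε < |t - y|}, a n y / ((t : ℂ) - (y : ℂ)))
      (nhdsWithin 0 (Set.Ioi 0))
      (nhds (if 0 ≤ n then a n t else - a n t)) := by
  simpa [HasHilbertTransformAt, ha] using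
    stmt_6_general (u := Complex.I) (z := -Complex.I) (by simp) (by simp) n t
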